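/- arXiv:1801.09871 — 5 statements merged into one kernel-verified Lean document; each statement's English description precedes it below -/
import Mathlib

section
/- The packing chromatic number of the graph H is at least 7; that is, H admits no k-packing coloring for any k ≤ 6. -/
/-- `W` is an `i`-packing in `G`: any two distinct vertices of `W` are at
graph distance greater than `i` in `G`. -/
def IsPacking {V : Type*} (G : SimpleGraph V) (i : ℕ) (W : Set V) : Prop :=
  ∀ u ∈ W, ∀ v ∈ W, u ≠ v → i < G.dist u v

/-- `c` is a `k`-packing coloring of `G`: every color lies in `{1, …, k}` and
for each `i ∈ {1, …, k}` the color class `c⁻¹(i)` is an `i`-packing. -/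
def IsPackingColoring {V : Type*} (G : SimpleGraph V) (k : ℕ) (c : V → ℕ) : Prop :=
  (∀ v, 1 ≤ c v ∧ c v ≤ k) ∧ ∀ i, 1 ≤ i → i ≤ k → IsPacking G i {v | c v = i}

/-- The packing chromatic number: the least `k` admitting a `k`-packing coloring. -/
noncomputable def packingChromaticNumber {V : Type*} (G : SimpleGraph V) : ℕ :=
  sInf {k | ∃ c : V → ℕ, IsPackingColoring G k c}

/-- Edges of `H`; vertices `y1,…,y7` are `0,…,6`, `z1,…,z7` are `7,…,13`,
and `w` is `14`. -/
def Hedges : List (Fin 15 × Fin 15) :=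
  [(0,1),(1,2),(2,6),(6,5),(5,4),(4,0),(1,3),(3,5),
   (7,8),(8,9),(9,13),(13,12),(12,11),(11,7),(8,10),(10,12),
   (3,14),(14,10),(2,7),(4,13)]

/-- The graph `H`. -/
def Hgraph : SimpleGraph (Fin 15) :=
  SimpleGraph.fromRel (fun u v => (u, v) ∈ Hedges)

/-!
Since `H` has diameter 4, each of the colors 4, 5, 6 occurs at most once in a 6-packing coloring, so
at most three vertices are *large*, i.e. have color at least 4. Without `w`, the graph consists of
the halves `{y₁, …, y₇}` and `{z₁, …, z₇}`, exchanged by an automorphism, so we may assume that at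
most one `yᵢ` is large. As the half has diameter 3, at most two `yᵢ` have color at least 3, and this
forces `y₂` and `y₆` to have color at least 3; up to the reflection `yᵢ ↔ y₈₋ᵢ`, `zᵢ ↔ z₈₋ᵢ`, the
vertex `y₂` has color 3 and `y₆` is large. The colors of the other `yᵢ` then alternate between 1
and 2 in one of two ways, and each of them makes at least three vertices outside the half large.
-/

open Finset

section Distance

variable {V W : Type*} {G : SimpleGraph V} {G' : SimpleGraph W} {u v : V} {n : ℕ}

theorem edist_le_succ_iff :
    G.edist u v ≤ (n + 1 : ℕ) ↔ u = v ∨ ∃ x, G.Adj u x ∧ G.edist x v ≤ n := by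
  constructor
  · intro h
    obtain ⟨p, hp⟩ := (SimpleGraph.reachable_of_edist_ne_top
      (ne_top_of_le_ne_top (ENat.natCast_ne_top _) h)).exists_walk_length_eq_edist
    cases p with
    | nil => exact .inl rfl
    | cons hadj q =>
      rw [← hp, SimpleGraph.Walk.length_cons, Nat.cast_le, Nat.add_le_add_iff_right] at h
      exact .inr ⟨_, hadj, q.edist_le.trans (Nat.cast_le.mpr h)⟩
  · rintro (rfl | ⟨x, hadj, hx⟩)
    · simp
    · calc G.edist u v ≤ G.edist u x + G.edist x v := G.edist_triangle
        _ ≤ 1 + n := add_le_add (SimpleGraph.edist_eq_one_iff_adj.mpr hadj).le hx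
        _ = (n + 1 : ℕ) := by rw [add_comm, Nat.cast_succ]

instance decidableEdistLe [Fintype V] [DecidableEq V] [DecidableRel G.Adj] :
    ∀ (n : ℕ) (u v : V), Decidable (G.edist u v ≤ n)
  | 0, u, v => decidable_of_iff (u = v) (by simp)
  | n + 1, _, _ =>
    have := decidableEdistLe n
    decidable_of_iff _ edist_le_succ_iff.symm

theorem edist_map_le (f : G →g G') (u v : V) : G'.edist (f u) (f v) ≤ G.edist u v :=
  le_iInf fun p => by simpa using (p.map f).edist_le

theorem edist_apply_iso (e : G ≃g G') (u v : V) : G'.edist (e u) (e v) = G.edist u v :=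
  le_antisymm (edist_map_le e.toHom u v) (by simpa using edist_map_le e.symm.toHom (e u) (e v))

theorem dist_apply_iso (e : G ≃g G') (u v : V) : G'.dist (e u) (e v) = G.dist u v :=
  congrArg ENat.toNat (edist_apply_iso e u v)

end Distance

section PackingColoring

variable {V W : Type*} {G : SimpleGraph V} {G' : SimpleGraph W} {c : V → ℕ} {u v : V}
  {i k l : ℕ}

namespace IsPackingColoring

theorem mono (hc : IsPackingColoring G k c) (hkl : k ≤ l) : IsPackingColoring G l c := by
  refine ⟨fun v => ⟨(hc.1 v).1, (hc.1 v).2.trans hkl⟩, fun i hi _ u hu v hv huv => ?_⟩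
  have hik : i ≤ k := hu ▸ (hc.1 u).2
  exact hc.2 i hi hik u hu v hv huv

theorem comp_iso {c : W → ℕ} (hc : IsPackingColoring G' k c) (e : G ≃g G') :
    IsPackingColoring G k (c ∘ e) := by
  refine ⟨fun v => hc.1 (e v), fun i hi hik u hu v hv huv => ?_⟩
  rw [← dist_apply_iso e]
  exact hc.2 i hi hik (e u) hu (e v) hv (e.injective.ne huv)

theorem ne_of_edist_le (hc : IsPackingColoring G k c) (hu : c u = i)
    (huv : u ≠ v := by decide) (hd : G.edist u v ≤ i := by decide +kernel) : c v ≠ i := by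
  intro hv
  have hlt := hc.2 i (hu ▸ (hc.1 u).1) (hu ▸ (hc.1 u).2) u hu v hv huv
  exact hlt.not_ge (ENat.toNat_le_of_le_natCast hd)

theorem exists_three_le_of_adj [DecidableEq V] (hc : IsPackingColoring G k c) (huv : G.Adj u v)
    (hu : c u ≠ 2) (hv : c v ≠ 2) : ∃ x ∈ ({u, v} : Finset V), 3 ≤ c x := by
  have hone : c u = 1 → c v ≠ 1 := fun h =>
    hc.ne_of_edist_le h huv.ne (SimpleGraph.edist_eq_one_iff_adj.mpr huv).le
  have hu_pos := (hc.1 u).1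
  have hv_pos := (hc.1 v).1
  simp only [mem_insert, mem_singleton, exists_eq_or_imp, exists_eq_left]
  omega

theorem card_le_of_color_mem_Icc {S : Finset V} {a b : ℕ} (hc : IsPackingColoring G k c)
    (hd : ∀ u ∈ S, ∀ v ∈ S, G.edist u v ≤ a) (hS : ∀ v ∈ S, c v ∈ Icc a b) :
    #S ≤ b + 1 - a := by
  have hinj : Set.InjOn c S := fun u hu v hv huv => by
    by_contra hne
    have hcu : (a : ℕ∞) ≤ c u := Nat.cast_le.mpr (mem_Icc.mp (hS u hu)).1
    exact hc.ne_of_edist_le rfl hne ((hd u hu v hv).trans hcu) huv.symm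
  simpa using card_le_card_of_injOn c hS hinj

end IsPackingColoring

theorem isPackingColoring_of_injective (hinj : Function.Injective c)
    (hc : ∀ v, 1 ≤ c v ∧ c v ≤ k) : IsPackingColoring G k c :=
  ⟨hc, fun _ _ _ _ hu _ hv huv => absurd (hinj (hu.trans hv.symm)) huv⟩

theorem exists_isPackingColoring [Finite V] (G : SimpleGraph V) :
    ∃ k, ∃ c : V → ℕ, IsPackingColoring G k c := by
  obtain ⟨n, ⟨e⟩⟩ := Finite.exists_equiv_fin V
  refine ⟨n, fun v => e v + 1, isPackingColoring_of_injective ?_ fun v => by simp⟩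
  exact (Nat.succ_injective.comp Fin.val_injective).comp e.injective

theorem lt_packingChromaticNumber [Finite V] (h : ¬ ∃ c : V → ℕ, IsPackingColoring G k c) :
    k < packingChromaticNumber G := by
  obtain ⟨c, hc⟩ := Nat.sInf_mem (exists_isPackingColoring G)
  by_contra! hle
  exact h ⟨c, hc.mono hle⟩

end PackingColoring

instance : DecidableRel Hgraph.Adj :=
  inferInstanceAs (DecidableRel (SimpleGraph.fromRel fun u v => (u, v) ∈ Hedges).Adj)

theorem Hgraph_edist_le_four (u v : Fin 15) : Hgraph.edist u v ≤ (4 : ℕ) := by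
  decide +kernel +revert

section Coloring

local notation "y₁" => (0 : Fin 15)
local notation "y₂" => (1 : Fin 15)
local notation "y₃" => (2 : Fin 15)
local notation "y₄" => (3 : Fin 15)
local notation "y₅" => (4 : Fin 15)
local notation "y₆" => (5 : Fin 15)
local notation "y₇" => (6 : Fin 15)
local notation "z₁" => (7 : Fin 15)
local notation "z₂" => (8 : Fin 15)
local notation "z₃" => (9 : Fin 15)
local notation "z₄" => (10 : Fin 15)
local notation "z₅" => (11 : Fin 15)
local notation "z₆" => (12 : Fin 15)
local notation "z₇" => (13 : Fin 15)
local notation "w" => (14 : Fin 15)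

/-- The half `{y₁, …, y₇}` of the vertices of `H`. -/
def yHalf : Finset (Fin 15) := {y₁, y₂, y₃, y₄, y₅, y₆, y₇}

/-- The half `{z₁, …, z₇}` of the vertices of `H`. -/
def zHalf : Finset (Fin 15) := {z₁, z₂, z₃, z₄, z₅, z₆, z₇}

/-- The automorphism of `H` that fixes `w` and exchanges the two halves. -/
def halfSwap : Hgraph ≃g Hgraph where
  toEquiv := .swap y₁ z₃ * .swap y₂ z₂ * .swap y₃ z₁ * .swap y₄ z₄ * .swap y₅ z₇ *
    .swap y₆ z₆ * .swap y₇ z₅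
  map_rel_iff' := by decide +kernel +revert

/-- The automorphism of `H` that sends `yᵢ` to `y₈₋ᵢ` and `zᵢ` to `z₈₋ᵢ` and fixes `w`. -/
def reflection : Hgraph ≃g Hgraph where
  toEquiv := .swap y₁ y₇ * .swap y₂ y₆ * .swap y₃ y₅ * .swap z₁ z₇ * .swap z₂ z₆ * .swap z₃ z₅
  map_rel_iff' := by decide +kernel +revert

theorem map_halfSwap_yHalf : yHalf.map halfSwap.toEquiv.toEmbedding = zHalf := by decide +kernel

theorem map_reflection_yHalf : yHalf.map reflection.toEquiv.toEmbedding = yHalf := by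
  decide +kernel

theorem edist_le_three_of_mem_yHalf :
    ∀ u ∈ yHalf, ∀ v ∈ yHalf, Hgraph.edist u v ≤ (3 : ℕ) := by
  decide +kernel

variable {c : Fin 15 → ℕ}

theorem card_large_comp_reflection (c : Fin 15 → ℕ) :
    #{v ∈ yHalf | 4 ≤ (c ∘ reflection) v} = #{v ∈ yHalf | 4 ≤ c v} := by
  conv_rhs => rw [← map_reflection_yHalf, filter_map, card_map]
  rfl

theorem card_large_comp_halfSwap (c : Fin 15 → ℕ) :
    #{v ∈ yHalf | 4 ≤ (c ∘ halfSwap) v} = #{v ∈ zHalf | 4 ≤ c v} := by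
  rw [← map_halfSwap_yHalf, filter_map, card_map]
  rfl

namespace IsPackingColoring

theorem card_le_three_of_four_le_color (hc : IsPackingColoring Hgraph 6 c) {S : Finset (Fin 15)}
    (hS : ∀ v ∈ S, 4 ≤ c v) : #S ≤ 3 :=
  hc.card_le_of_color_mem_Icc (b := 6) (fun u _ v _ => Hgraph_edist_le_four u v)
    fun v hv => mem_Icc.mpr ⟨hS v hv, (hc.1 v).2⟩

theorem exists_color_lt_four (hc : IsPackingColoring Hgraph 6 c) (v₁ v₂ v₃ v₄ : Fin 15)
    (h : #{v₁, v₂, v₃, v₄} = 4 := by decide) : c v₁ < 4 ∨ c v₂ < 4 ∨ c v₃ < 4 ∨ c v₄ < 4 := by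
  by_contra! hlarge
  have hcard := hc.card_le_three_of_four_le_color (S := {v₁, v₂, v₃, v₄}) (by simpa using hlarge)
  omega

theorem card_large_yHalf_le_one_or_card_large_zHalf_le_one (hc : IsPackingColoring Hgraph 6 c) :
    #{v ∈ yHalf | 4 ≤ c v} ≤ 1 ∨ #{v ∈ zHalf | 4 ≤ c v} ≤ 1 := by
  have hdisj : Disjoint yHalf zHalf := by decide
  have hcard := hc.card_le_three_of_four_le_color (S := {v ∈ yHalf ∪ zHalf | 4 ≤ c v})
    fun v hv => (mem_filter.mp hv).2
  rw [filter_union, card_union_of_disjoint (disjoint_filter_filter hdisj)] at hcard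
  omega

theorem card_three_le_color_yHalf_le_two (hc : IsPackingColoring Hgraph 6 c)
    (hY : #{v ∈ yHalf | 4 ≤ c v} ≤ 1) : #{v ∈ yHalf | 3 ≤ c v} ≤ 2 := by
  have hthree : #{v ∈ yHalf | c v = 3} ≤ 1 := by
    refine hc.card_le_of_color_mem_Icc (a := 3) (b := 3) (fun u hu v hv => ?_) fun v hv => ?_
    · exact edist_le_three_of_mem_yHalf u (mem_of_mem_filter u hu) v (mem_of_mem_filter v hv)
    · simp [(mem_filter.mp hv).2]
  calc #{v ∈ yHalf | 3 ≤ c v}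
    _ = #({v ∈ yHalf | c v = 3} ∪ {v ∈ yHalf | 4 ≤ c v}) := by
      rw [← filter_or]
      congr! 3
      omega
    _ ≤ 2 := (card_union_le _ _).trans (add_le_add hthree hY)

theorem exists_color_lt_three (hc : IsPackingColoring Hgraph 6 c) (hY : #{v ∈ yHalf | 4 ≤ c v} ≤ 1)
    (v₁ v₂ v₃ : Fin 15) (hmem : {v₁, v₂, v₃} ⊆ yHalf := by decide)
    (h : #{v₁, v₂, v₃} = 3 := by decide) : c v₁ < 3 ∨ c v₂ < 3 ∨ c v₃ < 3 := by
  by_contra! hge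
  have hsub : {v₁, v₂, v₃} ⊆ ({v ∈ yHalf | 3 ≤ c v} : Finset _) := fun v hv =>
    mem_filter.mpr ⟨hmem hv, by aesop⟩
  have := (card_le_card hsub).trans (hc.card_three_le_color_yHalf_le_two hY)
  omega

theorem color_y₂_ne_one (hc : IsPackingColoring Hgraph 6 c)
    (hY : #{v ∈ yHalf | 4 ≤ c v} ≤ 1) : c y₂ ≠ 1 := by
  intro h₂
  have h₁ : c y₁ ≠ 1 := hc.ne_of_edist_le h₂
  have h₃ : c y₃ ≠ 1 := hc.ne_of_edist_le h₂
  have h₄ : c y₄ ≠ 1 := hc.ne_of_edist_le h₂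
  have hpos := fun v => (hc.1 v).1
  have hhigh : 3 ≤ c y₁ ∧ 3 ≤ c y₃ ∨ 3 ≤ c y₁ ∧ 3 ≤ c y₄ ∨ 3 ≤ c y₃ ∧ 3 ≤ c y₄ := by
    have h₁₃ : c y₁ = 2 → c y₃ ≠ 2 := fun h => hc.ne_of_edist_le h
    have h₁₄ : c y₁ = 2 → c y₄ ≠ 2 := fun h => hc.ne_of_edist_le h
    have h₃₄ : c y₃ = 2 → c y₄ ≠ 2 := fun h => hc.ne_of_edist_le h
    grind
  have hlow : ∀ v ∈ ({y₅, y₆, y₇} : Finset _), c v < 3 := by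
    intro v hv
    rcases hhigh with h | h | h
    · have := hc.exists_color_lt_three hY y₁ y₃ v (by decide +revert) (by decide +revert)
      omega
    · have := hc.exists_color_lt_three hY y₁ y₄ v (by decide +revert) (by decide +revert)
      omega
    · have := hc.exists_color_lt_three hY y₃ y₄ v (by decide +revert) (by decide +revert)
      omega
  have h₆ : c y₆ ≠ 2 := by
    rcases hc.exists_color_lt_three hY y₁ y₃ y₄ with h | h | h
    · exact hc.ne_of_edist_le (u := y₁) (by grind)
    · exact hc.ne_of_edist_le (u := y₃) (by grind)
    · exact hc.ne_of_edist_le (u := y₄) (by grind)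
  have h₆ : c y₆ = 1 := by grind
  have h₅ : c y₅ = 2 := by
    have : c y₅ ≠ 1 := hc.ne_of_edist_le h₆
    grind
  have h₇ : c y₇ = 2 := by
    have : c y₇ ≠ 1 := hc.ne_of_edist_le h₆
    grind
  exact absurd h₇ (hc.ne_of_edist_le h₅)

theorem color_y₂_ne_two (hc : IsPackingColoring Hgraph 6 c)
    (hY : #{v ∈ yHalf | 4 ≤ c v} ≤ 1) : c y₂ ≠ 2 := by
  intro h₂
  obtain ⟨a, ha, hca⟩ := hc.exists_three_le_of_adj (u := y₁) (v := y₅) (by decide)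
    (hc.ne_of_edist_le h₂) (hc.ne_of_edist_le h₂)
  obtain ⟨b, hb, hcb⟩ := hc.exists_three_le_of_adj (u := y₃) (v := y₇) (by decide)
    (hc.ne_of_edist_le h₂) (hc.ne_of_edist_le h₂)
  obtain ⟨d, hd, hcd⟩ := hc.exists_three_le_of_adj (u := y₄) (v := y₆) (by decide)
    (hc.ne_of_edist_le h₂) (hc.ne_of_edist_le h₂)
  have hdistinct : ∀ a ∈ ({y₁, y₅} : Finset _), ∀ b ∈ ({y₃, y₇} : Finset _),
      ∀ d ∈ ({y₄, y₆} : Finset _), {a, b, d} ⊆ yHalf ∧ #{a, b, d} = 3 := by decide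
  obtain ⟨hmem, hcard⟩ := hdistinct a ha b hb d hd
  have := hc.exists_color_lt_three hY a b d hmem hcard
  omega

theorem three_le_color_y₂ (hc : IsPackingColoring Hgraph 6 c)
    (hY : #{v ∈ yHalf | 4 ≤ c v} ≤ 1) : 3 ≤ c y₂ := by
  have hpos := (hc.1 y₂).1
  have hone := hc.color_y₂_ne_one hY
  have htwo := hc.color_y₂_ne_two hY
  omega

theorem three_le_color_y₆ (hc : IsPackingColoring Hgraph 6 c)
    (hY : #{v ∈ yHalf | 4 ≤ c v} ≤ 1) : 3 ≤ c y₆ :=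
  (hc.comp_iso reflection).three_le_color_y₂ (card_large_comp_reflection c ▸ hY)

theorem color_y₂_eq_three_or_color_y₆_eq_three (hc : IsPackingColoring Hgraph 6 c)
    (hY : #{v ∈ yHalf | 4 ≤ c v} ≤ 1) :
    c y₂ = 3 ∧ 4 ≤ c y₆ ∨ c y₆ = 3 ∧ 4 ≤ c y₂ := by
  have h₂ := hc.three_le_color_y₂ hY
  have h₆ := hc.three_le_color_y₆ hY
  have hthree : c y₂ = 3 → c y₆ ≠ 3 := fun h => hc.ne_of_edist_le h
  have hlarge : ¬ (4 ≤ c y₂ ∧ 4 ≤ c y₆) := fun h =>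
    absurd (card_le_one.mp hY y₂ (mem_filter.mpr ⟨by decide, h.1⟩) y₆
      (mem_filter.mpr ⟨by decide, h.2⟩)) (by decide)
  omega

theorem yHalf_alternates (hc : IsPackingColoring Hgraph 6 c)
    (hY : #{v ∈ yHalf | 4 ≤ c v} ≤ 1) :
    (c y₃ = 1 ∧ c y₄ = 1 ∧ c y₅ = 1 ∧ c y₁ = 2 ∧ c y₇ = 2) ∨
      (c y₁ = 1 ∧ c y₄ = 1 ∧ c y₇ = 1 ∧ c y₃ = 2 ∧ c y₅ = 2) := by
  have h₂ := hc.three_le_color_y₂ hY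
  have h₆ := hc.three_le_color_y₆ hY
  have hone_or_two : ∀ v ∈ ({y₁, y₃, y₄, y₅, y₇} : Finset _), c v = 1 ∨ c v = 2 := by
    intro v hv
    have := hc.exists_color_lt_three hY y₂ y₆ v (by decide +revert) (by decide +revert)
    have := (hc.1 v).1
    omega
  have h₁₅ : c y₁ = 1 → c y₅ ≠ 1 := fun h => hc.ne_of_edist_le h
  have h₃₇ : c y₃ = 1 → c y₇ ≠ 1 := fun h => hc.ne_of_edist_le h
  have h₁₃ : c y₁ = 2 → c y₃ ≠ 2 := fun h => hc.ne_of_edist_le h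
  have h₅₇ : c y₅ = 2 → c y₇ ≠ 2 := fun h => hc.ne_of_edist_le h
  have h₄ : c y₄ ≠ 2 := by
    intro h
    have h₁ : c y₁ ≠ 2 := hc.ne_of_edist_le h
    have h₅ : c y₅ ≠ 2 := hc.ne_of_edist_le h
    grind
  grind

theorem color_w_eq_two (hc : IsPackingColoring Hgraph 6 c) (h₂ : c y₂ = 3) (h₄ : c y₄ = 1)
    (hw : c w < 4) : c w = 2 := by
  have hpos := (hc.1 w).1
  have hone : c w ≠ 1 := hc.ne_of_edist_le h₄
  have hthree : c w ≠ 3 := hc.ne_of_edist_le h₂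
  omega

theorem color_z₄_eq_one (hc : IsPackingColoring Hgraph 6 c) (h₂ : c y₂ = 3) (hw : c w = 2)
    (hz₄ : c z₄ < 4) : c z₄ = 1 := by
  have hpos := (hc.1 z₄).1
  have htwo : c z₄ ≠ 2 := hc.ne_of_edist_le hw
  have hthree : c z₄ ≠ 3 := hc.ne_of_edist_le h₂
  omega

theorem false_of_color_y₃_eq_one (hc : IsPackingColoring Hgraph 6 c) (h₂ : c y₂ = 3)
    (h₆ : 4 ≤ c y₆) (h₃ : c y₃ = 1) (h₄ : c y₄ = 1) (h₅ : c y₅ = 1) (h₁ : c y₁ = 2)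
    (h₇ : c y₇ = 2) : False := by
  have hpos := fun v => (hc.1 v).1
  have hz₁ : 4 ≤ c z₁ := by
    have hone : c z₁ ≠ 1 := hc.ne_of_edist_le h₃
    have htwo : c z₁ ≠ 2 := hc.ne_of_edist_le h₇
    have hthree : c z₁ ≠ 3 := hc.ne_of_edist_le h₂
    grind
  have hz₇ : 4 ≤ c z₇ := by
    have hone : c z₇ ≠ 1 := hc.ne_of_edist_le h₅
    have htwo : c z₇ ≠ 2 := hc.ne_of_edist_le h₁
    have hthree : c z₇ ≠ 3 := hc.ne_of_edist_le h₂
    grind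
  have hsmall : ∀ v ∈ ({w, z₂, z₄} : Finset _), c v < 4 := by
    intro v hv
    have := hc.exists_color_lt_four y₆ z₁ z₇ v (by decide +revert)
    omega
  have hw := hc.color_w_eq_two h₂ h₄ (hsmall w (by decide))
  have hz₄ := hc.color_z₄_eq_one h₂ hw (hsmall z₄ (by decide))
  have hz₂ : c z₂ = 1 := by
    have htwo : c z₂ ≠ 2 := hc.ne_of_edist_le hw
    have hthree : c z₂ ≠ 3 := hc.ne_of_edist_le h₂
    grind
  exact absurd hz₂ (hc.ne_of_edist_le hz₄)

theorem false_of_color_y₃_eq_two (hc : IsPackingColoring Hgraph 6 c) (h₂ : c y₂ = 3)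
    (h₆ : 4 ≤ c y₆) (h₄ : c y₄ = 1) (h₃ : c y₃ = 2) (h₅ : c y₅ = 2) : False := by
  have hpos := fun v => (hc.1 v).1
  have htwo : ∀ v ∈ ({z₁, z₂, z₃, z₅, z₆, z₇} : Finset _), c v ≠ 2 := by
    intro v hv
    have hnear : Hgraph.edist y₃ v ≤ (2 : ℕ) ∨ Hgraph.edist y₅ v ≤ (2 : ℕ) := by
      decide +kernel +revert
    rcases hnear with h | h
    · exact hc.ne_of_edist_le h₃ (by rintro rfl; simp at hv) h
    · exact hc.ne_of_edist_le h₅ (by rintro rfl; simp at hv) h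
  have hthree : ∀ v ∈ ({z₁, z₂, z₅, z₇} : Finset _), c v ≠ 3 := fun v hv =>
    hc.ne_of_edist_le h₂ (by decide +revert) (by decide +kernel +revert)
  obtain ⟨a, ha, hca⟩ : ∃ a ∈ ({z₁, z₂} : Finset _), 4 ≤ c a := by
    have h₁₂ : c z₁ = 1 → c z₂ ≠ 1 := fun h => hc.ne_of_edist_le h
    grind
  obtain ⟨b, hb, hcb⟩ : ∃ b ∈ ({z₃, z₆, z₇} : Finset _), 4 ≤ c b := by
    have h₇₃ : c z₇ = 1 → c z₃ ≠ 1 := fun h => hc.ne_of_edist_le h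
    have h₇₆ : c z₇ = 1 → c z₆ ≠ 1 := fun h => hc.ne_of_edist_le h
    have h₃₆ : c z₃ = 3 → c z₆ ≠ 3 := fun h => hc.ne_of_edist_le h
    grind
  have hsmall : ∀ v ∈ ({w, z₄} : Finset _), c v < 4 := by
    have hdistinct : ∀ a ∈ ({z₁, z₂} : Finset _), ∀ b ∈ ({z₃, z₆, z₇} : Finset _),
        ∀ v ∈ ({w, z₄} : Finset _), #{y₆, a, b, v} = 4 := by decide
    intro v hv
    have := hc.exists_color_lt_four y₆ a b v (hdistinct a ha b hb v hv)
    omega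
  have hw := hc.color_w_eq_two h₂ h₄ (hsmall w (by decide))
  have hz₄ := hc.color_z₄_eq_one h₂ hw (hsmall z₄ (by decide))
  have hz₂ : 4 ≤ c z₂ := by
    have hone : c z₂ ≠ 1 := hc.ne_of_edist_le hz₄
    grind
  have hone : ∀ v ∈ ({z₁, z₅} : Finset _), c v = 1 := by
    have hdistinct : ∀ b ∈ ({z₃, z₆, z₇} : Finset _), ∀ v ∈ ({z₁, z₅} : Finset _),
        #{y₆, z₂, b, v} = 4 := by decide
    intro v hv
    have := hc.exists_color_lt_four y₆ z₂ b v (hdistinct b hb v hv)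
    grind
  exact absurd (hone z₅ (by decide)) (hc.ne_of_edist_le (hone z₁ (by decide)))

theorem color_y₂_ne_three (hc : IsPackingColoring Hgraph 6 c)
    (hY : #{v ∈ yHalf | 4 ≤ c v} ≤ 1) : c y₂ ≠ 3 := by
  intro h₂
  have h₆ : 4 ≤ c y₆ := by
    have := hc.color_y₂_eq_three_or_color_y₆_eq_three hY
    omega
  rcases hc.yHalf_alternates hY with ⟨h₃, h₄, h₅, h₁, h₇⟩ | ⟨-, h₄, -, h₃, h₅⟩
  · exact hc.false_of_color_y₃_eq_one h₂ h₆ h₃ h₄ h₅ h₁ h₇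
  · exact hc.false_of_color_y₃_eq_two h₂ h₆ h₄ h₃ h₅

theorem color_y₆_ne_three (hc : IsPackingColoring Hgraph 6 c)
    (hY : #{v ∈ yHalf | 4 ≤ c v} ≤ 1) : c y₆ ≠ 3 :=
  (hc.comp_iso reflection).color_y₂_ne_three (card_large_comp_reflection c ▸ hY)

theorem one_lt_card_large_yHalf (hc : IsPackingColoring Hgraph 6 c) :
    1 < #{v ∈ yHalf | 4 ≤ c v} := by
  by_contra! hY
  rcases hc.color_y₂_eq_three_or_color_y₆_eq_three hY with h | h
  · exact hc.color_y₂_ne_three hY h.1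
  · exact hc.color_y₆_ne_three hY h.1

theorem one_lt_card_large_zHalf (hc : IsPackingColoring Hgraph 6 c) :
    1 < #{v ∈ zHalf | 4 ≤ c v} :=
  card_large_comp_halfSwap c ▸ (hc.comp_iso halfSwap).one_lt_card_large_yHalf

end IsPackingColoring

end Coloring

/-- The packing chromatic number of `H` is at least `7`; that is, `H` admits
no `k`-packing coloring for any `k ≤ 6`. -/
theorem stmt0 :
    7 ≤ packingChromaticNumber Hgraph ∧
    ∀ k ≤ 6, ¬ ∃ c : Fin 15 → ℕ, IsPackingColoring Hgraph k c := by
  have not_six : ¬ ∃ c : Fin 15 → ℕ, IsPackingColoring Hgraph 6 c := by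
    rintro ⟨c, hc⟩
    rcases hc.card_large_yHalf_le_one_or_card_large_zHalf_le_one with h | h
    · exact h.not_gt hc.one_lt_card_large_yHalf
    · exact h.not_gt hc.one_lt_card_large_zHalf
  exact ⟨lt_packingChromaticNumber not_six, fun k hk ⟨c, hc⟩ => not_six ⟨c, hc.mono hk⟩⟩
end

section
/- The graph H is connected and has diameter exactly 4 (the maximum over all pairs of vertices of the graph distance equals 4). -/
/-!
Breadth-first search computes the balls of a locally finite graph: the closed ball of radius `n + 1`
is the closed ball of radius `n` together with the neighbours of its vertices. In `H` every ball of
radius `4` is the whole vertex set, while the ball of radius `3` around `y₁` misses `z₂`.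
-/

open SimpleGraph

section ClosedBall

variable {V : Type*} {G : SimpleGraph V}

theorem edist_le_natCast_add_one_iff {u v : V} {n : ℕ} :
    G.edist u v ≤ n + 1 ↔ G.edist u v ≤ n ∨ ∃ w, G.edist u w ≤ n ∧ G.Adj w v := by
  constructor
  · intro h
    have hfinite : G.edist u v ≠ ⊤ := ne_top_of_le_ne_top (ENat.natCast_ne_top (n + 1)) h
    obtain ⟨p, hp⟩ := exists_walk_of_edist_ne_top hfinite
    have hlen : p.length ≤ n + 1 := by exact_mod_cast hp.trans_le h
    by_cases hnil : p.Nil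
    · exact .inl (by simp [hnil.eq])
    · have hdrop : p.dropLast.length ≤ n := by
        have := p.length_dropLast_add_one hnil
        omega
      exact .inr ⟨_, p.dropLast.edist_le.trans (by exact_mod_cast hdrop), p.adj_penultimate hnil⟩
  · rintro (h | ⟨w, huw, hwv⟩)
    · exact h.trans le_self_add
    · calc G.edist u v ≤ G.edist u w + G.edist w v := G.edist_triangle
        _ ≤ n + 1 := add_le_add huw (edist_eq_one_iff_adj.mpr hwv).le

variable [DecidableEq V] [G.LocallyFinite]

variable (G) in
/-- The vertices at distance at most `n` from `u`, computed by `n` rounds of breadth-first search.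
Unlike the open balls `SimpleGraph.ball`, this is a finset that the kernel can evaluate. -/
def closedBallFinset (u : V) : ℕ → Finset V
  | 0 => {u}
  | n + 1 => closedBallFinset u n ∪ (closedBallFinset u n).biUnion fun w => G.neighborFinset w

theorem mem_closedBallFinset {u v : V} {n : ℕ} :
    v ∈ closedBallFinset G u n ↔ G.edist u v ≤ n := by
  induction n generalizing v with
  | zero => simp [closedBallFinset, eq_comm (a := v)]
  | succ n ih => simp [closedBallFinset, edist_le_natCast_add_one_iff, ih]

end ClosedBall

instance inst_s1 : DecidableRel Hgraph.Adj :=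
  inferInstanceAs (DecidableRel (SimpleGraph.fromRel _).Adj)

theorem closedBallFinset_Hgraph_four (u : Fin 15) :
    closedBallFinset Hgraph u 4 = Finset.univ := by
  decide +kernel +revert

theorem closedBallFinset_Hgraph_zero_three :
    closedBallFinset Hgraph 0 3 = {8, 10, 11}ᶜ := by
  decide +kernel

theorem ediam_Hgraph : Hgraph.ediam = 4 := by
  apply le_antisymm
  · refine ediam_le_of_edist_le fun u v => mem_closedBallFinset.mp ?_
    rw [closedBallFinset_Hgraph_four]
    exact Finset.mem_univ v
  · have hfar : ¬ Hgraph.edist 0 8 ≤ (3 : ℕ) := by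
      rw [← mem_closedBallFinset, closedBallFinset_Hgraph_zero_three]
      decide
    calc (4 : ℕ∞) = (3 : ℕ) + 1 := rfl
      _ ≤ Hgraph.edist 0 8 := Order.add_one_le_of_lt (not_le.mp hfar)
      _ ≤ Hgraph.ediam := edist_le_ediam

/-- `H` is connected and has diameter exactly `4`. -/
theorem stmt1 :
    Hgraph.Connected ∧ (∀ u v, Hgraph.dist u v ≤ 4) ∧
    ∃ u v, Hgraph.dist u v = 4 := by
  have hfinite : Hgraph.ediam ≠ ⊤ := by simp [ediam_Hgraph]
  have hdiam : Hgraph.diam = 4 := by simp [diam, ediam_Hgraph]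
  exact ⟨connected_of_ediam_ne_top hfinite, fun u v => hdiam ▸ dist_le_diam hfinite,
    hdiam ▸ exists_dist_eq_diam⟩
end

section
/- Every 2-packing in the graph H has at most 5 vertices. -/
/-! Each closed neighbourhood contains at most one vertex of a `2`-packing, so a `2`-packing is no
larger than any dominating set; and `{y2, y6, z2, z6, w}` dominates `H`. -/

section

variable {V : Type*} {G : SimpleGraph V} {i r : ℕ} {W D : Set V} {u v : V}

/-- `D` is a distance-`r` dominating set of `G`; for `r = 1` this is the usual notion of a
dominating set. The extended distance makes unreachable vertices infinitely far apart, whereas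
`G.dist` would place them at distance `0`. -/
def IsDominating (G : SimpleGraph V) (r : ℕ) (D : Set V) : Prop :=
  ∀ v, ∃ d ∈ D, G.edist v d ≤ r

theorem isDominating_one_iff :
    IsDominating G 1 D ↔ ∀ v, ∃ d ∈ D, G.Adj v d ∨ v = d := by
  simp only [IsDominating, Nat.cast_one, SimpleGraph.edist_le_one_iff_adj_or_eq]

theorem IsPacking.eq_of_edist_le (hW : IsPacking G i W) (hu : u ∈ W) (hv : v ∈ W)
    (huv : G.edist u v ≤ i) : u = v := by
  by_contra hne
  exact (hW u hu v hv hne).not_ge (ENat.toNat_le_of_le_natCast huv)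

theorem IsPacking.encard_le_of_isDominating (hW : IsPacking G i W) (hD : IsDominating G r D)
    (hri : 2 * r ≤ i) : W.encard ≤ D.encard := by
  choose f hfD hf using hD
  refine Set.encard_le_encard_of_injOn (f := f) (fun v _ => hfD v) fun u hu v hv hfuv => ?_
  refine hW.eq_of_edist_le hu hv ?_
  calc G.edist u v
      ≤ G.edist u (f u) + G.edist (f u) v := G.edist_triangle
    _ = G.edist u (f u) + G.edist v (f v) := by rw [hfuv, G.edist_comm (u := v)]
    _ ≤ r + r := add_le_add (hf u) (hf v)
    _ ≤ i := by rw [← two_mul]; exact_mod_cast hri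

end

theorem isDominating_Hgraph : IsDominating Hgraph 1 {1, 5, 8, 12, 14} := by
  rw [isDominating_one_iff]
  unfold Hgraph
  decide

/-- Every `2`-packing in `H` has at most `5` vertices. -/
theorem stmt2 (W : Set (Fin 15)) (hW : IsPacking Hgraph 2 W) : W.ncard ≤ 5 := by
  have hencard : W.encard ≤ 5 :=
    calc W.encard
        ≤ ({1, 5, 8, 12, 14} : Set (Fin 15)).encard :=
          hW.encard_le_of_isDominating isDominating_Hgraph le_rfl
      _ = 5 := by simp [Set.encard_eq_coe_toFinset_card]
  exact ENat.toNat_le_of_le_natCast hencard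
end

section
/- Every 3-packing in the graph H has at most 2 vertices. -/
/-!
`H` is made of two theta graphs, on the `y`s and on the `z`s, two edges between them, and `w`.
Any two `y`s lie on a common cycle of length at most `6`, and any two vertices among the `z`s and
`w` lie on a common closed walk of length at most `7`. Two vertices on a closed walk of length `n`
are at distance at most `n / 2`, so the `y`s on one side and the `z`s with `w` on the other form two
sets of diameter at most `3`, each of which meets a `3`-packing in at most one vertex.
-/

section General

variable {V : Type*} {G : SimpleGraph V} {u v : V}

lemma IsPacking.ncard_le_card_of_dist_le {ι : Type*} [Finite ι] {i : ℕ} {W : Set V}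
    (hW : IsPacking G i W) (f : V → ι) (hf : ∀ u v, f u = f v → G.dist u v ≤ i) :
    W.ncard ≤ Nat.card ι := by
  have f_injOn : W.InjOn f := fun u hu v hv huv =>
    by_contra fun hne => (hW u hu v hv hne).not_ge (hf u v huv)
  rw [← f_injOn.ncard_image]
  exact Set.ncard_le_card _

lemma two_mul_dist_le_length_of_mem_support {x : V} (c : G.Walk x x) (hu : u ∈ c.support)
    (hv : v ∈ c.support) : 2 * G.dist u v ≤ c.length := by
  classical
  have hv' : v ∈ (c.rotate u hu).support := (c.mem_support_rotate_iff u hu).2 hv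
  set p := (c.rotate u hu).takeUntil v hv'
  set q := (c.rotate u hu).dropUntil v hv'
  calc 2 * G.dist u v = G.dist u v + G.dist v u := by rw [two_mul, G.dist_comm (u := v)]
    _ ≤ p.length + q.length := add_le_add (SimpleGraph.dist_le p) (SimpleGraph.dist_le q)
    _ = c.length := by
      rw [← SimpleGraph.Walk.length_append, SimpleGraph.Walk.take_spec,
        SimpleGraph.Walk.length_rotate]

lemma two_mul_dist_le_length_of_cycle_chain {s : Cycle V} (hs : s.Chain G.Adj) (hu : u ∈ s)
    (hv : v ∈ s) : 2 * G.dist u v ≤ s.length := by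
  induction s using Cycle.induction_on with
  | nil => exact absurd hu (Cycle.notMem_nil u)
  | cons a l _ =>
    rw [Cycle.chain_coe_cons] at hs
    let p := SimpleGraph.Walk.ofSupport _ (List.cons_ne_nil a (l ++ [a])) hs
    let c : G.Walk a a := p.copy rfl (by simp)
    have support_c : c.support = a :: (l ++ [a]) :=
      (p.support_copy _ _).trans (SimpleGraph.Walk.support_ofSupport _ hs)
    have length_c : c.length = (a :: l).length :=
      calc c.length = p.length := p.length_copy _ _
        _ = (a :: (l ++ [a])).length - 1 := SimpleGraph.Walk.length_ofSupport _ hs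
        _ = (a :: l).length := by simp
    have mem_support {x : V} (hx : x ∈ (↑(a :: l) : Cycle V)) : x ∈ c.support := by
      rw [support_c, ← List.cons_append]
      exact List.mem_append_left _ (Cycle.mem_coe_iff.1 hx)
    exact (two_mul_dist_le_length_of_mem_support c (mem_support hu) (mem_support hv)).trans_eq
      length_c

end General

/-- Membership of a vertex of `H` in `{y1, …, y7}`; the other class is `{z1, …, z7, w}`. -/
def isY (v : Fin 15) : Bool := decide (v < 7)

/-- Cyclic vertex sequences of closed walks in `H`: the three cycles of the theta graph on the
`y`s, the hexagon on the `z`s, and the two pentagons on the `z`s through `z4`, each extended by the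
detour `z4, w, z4` so as to contain `w` too. -/
def shortClosedWalks : List (List (Fin 15)) :=
  [[0, 1, 2, 6, 5, 4], [1, 2, 6, 5, 3], [0, 1, 3, 5, 4],
   [7, 8, 9, 13, 12, 11], [14, 10, 8, 9, 13, 12, 10], [14, 10, 8, 7, 11, 12, 10]]

lemma chain_adj_of_mem_shortClosedWalks {l : List (Fin 15)} (hl : l ∈ shortClosedWalks) :
    (l : Cycle (Fin 15)).Chain Hgraph.Adj := by
  simp only [shortClosedWalks, List.mem_cons, List.not_mem_nil, or_false] at hl
  rcases hl with rfl | rfl | rfl | rfl | rfl | rfl <;>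
    simp [Hgraph, Hedges]

lemma length_le_of_mem_shortClosedWalks : ∀ l ∈ shortClosedWalks, l.length ≤ 7 := by
  decide

lemma exists_mem_shortClosedWalks_of_isY_eq :
    ∀ u v, isY u = isY v → ∃ l ∈ shortClosedWalks, u ∈ l ∧ v ∈ l := by
  decide

lemma dist_le_three_of_isY_eq (u v : Fin 15) (huv : isY u = isY v) : Hgraph.dist u v ≤ 3 := by
  obtain ⟨l, hl, hul, hvl⟩ := exists_mem_shortClosedWalks_of_isY_eq u v huv
  have two_mul_dist_le : 2 * Hgraph.dist u v ≤ l.length :=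
    two_mul_dist_le_length_of_cycle_chain (chain_adj_of_mem_shortClosedWalks hl) hul hvl
  have length_le : l.length ≤ 7 := length_le_of_mem_shortClosedWalks l hl
  omega

/-- Every `3`-packing in `H` has at most `2` vertices. -/
theorem stmt3 (W : Set (Fin 15)) (hW : IsPacking Hgraph 3 W) : W.ncard ≤ 2 := by
  simpa using hW.ncard_le_card_of_dist_le isY dist_le_three_of_isY_eq
end

section
/- The packing chromatic number is unbounded on connected subcubic graphs: for every natural number n there exists a finite connected simple graph G with maximum degree at most 3 such that χρ(G) ≥ n. -/
/-!
In a graph whose root has eccentricity at most `k`, every color `i ≥ 2 * k` is used at most once,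
since any two vertices are at distance at most `2 * k`. Suppose that every packing coloring gives
at least four vertices a color `≥ 2 * k`. Then at least two of them have a color `≥ 2 * k + 2`.
Joining two copies of the graph to a new root raises the eccentricity of the root to `k + 1` and
again leaves at least four vertices of color `≥ 2 * (k + 1)`. The construction keeps the graph
subcubic if the root has degree at most two, so it can be iterated, and the colors needed are
unbounded.

It starts with `k = 4` from a graph on 27 vertices of diameter 4 in which the colors `1`, `2`, `3`
can be used at most `11`, `5`, `3` times and the colors `4`, …, `7` at most once each, so that
at least `27 - 23 = 4` vertices have a color `≥ 8`.
-/

namespace PackingColoring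

variable {V : Type*} {G : SimpleGraph V} {r : V} {c : V → ℕ} {i k m a : ℕ}

/-! ### Forcing large colors -/

/-- A packing coloring of `G` by positive integers, with no bound on the colors. -/
structure IsUnboundedPackingColoring (G : SimpleGraph V) (c : V → ℕ) : Prop where
  pos : ∀ v, 1 ≤ c v
  isPacking : ∀ i, IsPacking G i {v | c v = i}

/-- Every packing coloring of `G` gives at least `m` vertices a color `≥ k`. For infinite `G` this
is subject to the convention that an infinite set has `ncard` zero. -/
def ForcesLargeColors (G : SimpleGraph V) (k m : ℕ) : Prop :=
  ∀ c, IsUnboundedPackingColoring G c → m ≤ {v | k ≤ c v}.ncard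

/-- The `i`-packing number of `G` is at most `a`. -/
def PackingCardLE (G : SimpleGraph V) (i a : ℕ) : Prop :=
  ∀ W : Set V, IsPacking G i W → W.ncard ≤ a

theorem IsUnboundedPackingColoring.of_isPackingColoring (hc : IsPackingColoring G k c) :
    IsUnboundedPackingColoring G c where
  pos v := (hc.1 v).1
  isPacking i u hu v hv huv := by
    obtain rfl : c u = i := hu
    exact hc.2 (c u) (hc.1 u).1 (hc.1 u).2 u rfl v hv huv

theorem exists_isPackingColoring [Finite V] (G : SimpleGraph V) :
    ∃ k c, IsPackingColoring G k c := by
  obtain ⟨n, ⟨e⟩⟩ := Finite.exists_equiv_fin V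
  refine ⟨n, fun v => e v + 1, fun v => ⟨Nat.succ_pos _, (e v).isLt⟩, ?_⟩
  intro i _ _ u hu v hv huv
  have heq : (e u : ℕ) + 1 = e v + 1 := Eq.trans hu (Eq.symm hv)
  exact absurd (e.injective (Fin.ext (Nat.succ_injective heq))) huv

theorem ForcesLargeColors.le_packingChromaticNumber [Finite V] (h : ForcesLargeColors G k m)
    (hm : 0 < m) : k ≤ packingChromaticNumber G := by
  refine le_csInf (exists_isPackingColoring G) ?_
  rintro j ⟨c, hc⟩
  have hpos : 0 < {v | k ≤ c v}.ncard := hm.trans_le (h c (.of_isPackingColoring hc))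
  obtain ⟨v, hv⟩ := Set.nonempty_of_ncard_ne_zero hpos.ne'
  exact le_trans hv (hc.1 v).2

theorem forcesLargeColors_one (G : SimpleGraph V) : ForcesLargeColors G 1 (Nat.card V) := by
  intro c hc
  have huniv : {v | 1 ≤ c v} = Set.univ := Set.eq_univ_of_forall hc.pos
  rw [huniv, Set.ncard_univ]

theorem ForcesLargeColors.succ [Finite V] (h : ForcesLargeColors G i (m + a))
    (hi : PackingCardLE G i a) : ForcesLargeColors G (i + 1) m := by
  intro c hc
  have hsplit : {v | i ≤ c v} = {v | i + 1 ≤ c v} ∪ {v | c v = i} := by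
    ext v
    simp only [Set.mem_ofPred_eq, Set.mem_union]
    omega
  have hle : m + a ≤ {v | i + 1 ≤ c v}.ncard + a :=
    calc m + a ≤ {v | i ≤ c v}.ncard := h c hc
      _ ≤ {v | i + 1 ≤ c v}.ncard + {v | c v = i}.ncard := hsplit ▸ Set.ncard_union_le _ _
      _ ≤ {v | i + 1 ≤ c v}.ncard + a := Nat.add_le_add_left (hi _ (hc.isPacking i)) _
  exact Nat.le_of_add_le_add_right hle

theorem packingCardLE_one_of_dist_le (h : ∀ u v, G.dist u v ≤ i) : PackingCardLE G i 1 := by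
  intro W hW
  have hsub : W.Subsingleton := fun u hu v hv =>
    by_contra fun huv => (hW u hu v hv huv).not_ge (h u v)
  exact (Set.ncard_le_one hsub.finite).2 fun u hu v hv => hsub hu hv

theorem dist_map_le {V' : Type*} {G' : SimpleGraph V'} (f : G →g G') (hG : G.Connected) (u v : V) :
    G'.dist (f u) (f v) ≤ G.dist u v := by
  obtain ⟨p, hp⟩ := hG.exists_walk_length_eq_dist u v
  rw [← hp, ← p.length_map f]
  exact SimpleGraph.dist_le _

theorem IsUnboundedPackingColoring.comp {V' : Type*} {G' : SimpleGraph V'} {c : V' → ℕ}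
    (hc : IsUnboundedPackingColoring G' c) (f : G →g G') (hf : Function.Injective f)
    (hG : G.Connected) : IsUnboundedPackingColoring G (c ∘ f) where
  pos v := hc.pos (f v)
  isPacking i u hu v hv huv :=
    (hc.isPacking i (f u) hu (f v) hv (hf.ne huv)).trans_le (dist_map_le f hG u v)

/-! ### Joining two copies of a rooted graph -/

/-- A connected subcubic graph with a root of degree at most two, from which every vertex is at
distance at most `k`. -/
structure IsRootedSubcubic (G : SimpleGraph V) (r : V) (k : ℕ) : Prop where
  connected : G.Connected
  ncard_neighborSet_le : ∀ v, (G.neighborSet v).ncard ≤ 3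
  ncard_neighborSet_root_le : (G.neighborSet r).ncard ≤ 2
  dist_root_le : ∀ v, G.dist v r ≤ k

theorem IsRootedSubcubic.packingCardLE_one (h : IsRootedSubcubic G r k) (hi : 2 * k ≤ i) :
    PackingCardLE G i 1 := by
  refine packingCardLE_one_of_dist_le fun u v => ?_
  calc G.dist u v ≤ G.dist u r + G.dist r v := h.connected.dist_triangle
    _ ≤ k + k := Nat.add_le_add (h.dist_root_le u) (G.dist_comm ▸ h.dist_root_le v)
    _ ≤ i := by omega

/-- Two disjoint copies of `G`, indexed by `Bool`, together with a new vertex `none` adjacent to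
the copies of `r`. -/
def joinCopies (G : SimpleGraph V) (r : V) : SimpleGraph (Option (Bool × V)) where
  Adj
    | none, none => False
    | none, some (_, v) => v = r
    | some (_, u), none => u = r
    | some (b, u), some (b', v) => b = b' ∧ G.Adj u v
  symm := ⟨by
    rintro (_ | ⟨b, u⟩) (_ | ⟨b', v⟩) h
    exacts [h, h, h, ⟨h.1.symm, h.2.symm⟩]⟩
  loopless := ⟨by
    rintro (_ | ⟨b, u⟩) h
    exacts [h, G.irrefl h.2]⟩

@[simp]
theorem joinCopies_adj_none_some {b : Bool} {v : V} :
    (joinCopies G r).Adj none (some (b, v)) ↔ v = r := .rfl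

@[simp]
theorem joinCopies_adj_some_none {b : Bool} {v : V} :
    (joinCopies G r).Adj (some (b, v)) none ↔ v = r := .rfl

@[simp]
theorem joinCopies_adj_some_some {b b' : Bool} {u v : V} :
    (joinCopies G r).Adj (some (b, u)) (some (b', v)) ↔ b = b' ∧ G.Adj u v := .rfl

/-- The inclusion of one of the two copies of `G`. -/
def copyHom (G : SimpleGraph V) (r : V) (b : Bool) : G →g joinCopies G r where
  toFun v := some (b, v)
  map_rel' h := ⟨rfl, h⟩

@[simp]
theorem copyHom_apply (b : Bool) (v : V) : copyHom G r b v = some (b, v) := rfl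

theorem copyHom_injective (b : Bool) : Function.Injective (copyHom G r b) := fun _ _ h =>
  congrArg Prod.snd (Option.some.inj h)

theorem joinCopies_connected (hG : G.Connected) : (joinCopies G r).Connected := by
  refine SimpleGraph.connected_iff_exists_forall_reachable _ |>.2 ⟨none, ?_⟩
  rintro (_ | ⟨b, v⟩)
  · exact .rfl
  · have hroot : (joinCopies G r).Adj none (copyHom G r b r) := joinCopies_adj_none_some.2 rfl
    exact hroot.reachable.trans ((hG.preconnected r v).map (copyHom G r b))

theorem dist_joinCopies_root_le (hG : G.Connected) (b : Bool) (v : V) :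
    (joinCopies G r).dist (some (b, v)) none ≤ G.dist v r + 1 := by
  have hroot : (joinCopies G r).Adj (copyHom G r b r) none := joinCopies_adj_some_none.2 rfl
  calc (joinCopies G r).dist (copyHom G r b v) none
      ≤ (joinCopies G r).dist (copyHom G r b v) (copyHom G r b r)
        + (joinCopies G r).dist (copyHom G r b r) none := (joinCopies_connected hG).dist_triangle
    _ ≤ G.dist v r + 1 :=
      Nat.add_le_add (dist_map_le _ hG v r) (SimpleGraph.dist_eq_one_iff_adj.2 hroot).le

theorem neighborSet_joinCopies_none :
    (joinCopies G r).neighborSet none = {some (true, r), some (false, r)} := by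
  ext (_ | ⟨_ | _, v⟩) <;> simp

theorem neighborSet_joinCopies_root (b : Bool) :
    (joinCopies G r).neighborSet (some (b, r)) =
      insert none (copyHom G r b '' G.neighborSet r) := by
  ext (_ | ⟨b', v⟩) <;> simp [and_comm]

theorem neighborSet_joinCopies_of_ne {v : V} (hv : v ≠ r) (b : Bool) :
    (joinCopies G r).neighborSet (some (b, v)) = copyHom G r b '' G.neighborSet v := by
  ext (_ | ⟨b', w⟩) <;> simp [hv, and_comm]

theorem ncard_neighborSet_joinCopies_le (h3 : ∀ v, (G.neighborSet v).ncard ≤ 3)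
    (h2 : (G.neighborSet r).ncard ≤ 2) (x : Option (Bool × V)) :
    ((joinCopies G r).neighborSet x).ncard ≤ 3 := by
  rcases x with _ | ⟨b, v⟩
  · rw [neighborSet_joinCopies_none, Set.ncard_pair (by simp)]
    omega
  · by_cases hv : v = r
    · subst hv
      rw [neighborSet_joinCopies_root]
      refine (Set.ncard_insert_le _ _).trans (Nat.succ_le_succ ?_)
      rwa [Set.ncard_image_of_injective _ (copyHom_injective b)]
    · rw [neighborSet_joinCopies_of_ne hv, Set.ncard_image_of_injective _ (copyHom_injective b)]
      exact h3 v

theorem IsRootedSubcubic.joinCopies (h : IsRootedSubcubic G r k) :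
    IsRootedSubcubic (joinCopies G r) none (k + 1) where
  connected := joinCopies_connected h.connected
  ncard_neighborSet_le :=
    ncard_neighborSet_joinCopies_le h.ncard_neighborSet_le h.ncard_neighborSet_root_le
  ncard_neighborSet_root_le := by
    rw [neighborSet_joinCopies_none, Set.ncard_pair (by simp)]
  dist_root_le := by
    rintro (_ | ⟨b, v⟩)
    · simp
    · exact (dist_joinCopies_root_le h.connected b v).trans
        (Nat.succ_le_succ (h.dist_root_le v))

theorem ForcesLargeColors.joinCopies [Finite V] (h : ForcesLargeColors G k m)
    (hG : G.Connected) (r : V) : ForcesLargeColors (joinCopies G r) k (2 * m) := by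
  intro c hc
  have hcopy (b : Bool) : m ≤ (copyHom G r b '' {v | k ≤ c (copyHom G r b v)}).ncard := by
    rw [Set.ncard_image_of_injective _ (copyHom_injective b)]
    exact h _ (hc.comp (copyHom G r b) (copyHom_injective b) hG)
  have hdisj : Disjoint (copyHom G r true '' {v | k ≤ c (copyHom G r true v)})
      (copyHom G r false '' {v | k ≤ c (copyHom G r false v)}) := by
    rw [Set.disjoint_left]
    rintro _ ⟨u, -, rfl⟩ ⟨v, -, hv⟩
    simp at hv
  calc 2 * m = m + m := two_mul m
    _ ≤ _ := Nat.add_le_add (hcopy true) (hcopy false)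
    _ = _ := (Set.ncard_union_eq hdisj).symm
    _ ≤ {x | k ≤ c x}.ncard := Set.ncard_le_ncard <| by
      rintro _ (⟨v, hv, rfl⟩ | ⟨v, hv, rfl⟩) <;> exact hv

theorem IsRootedSubcubic.forcesLargeColors_joinCopies [Finite V] (h : IsRootedSubcubic G r k)
    (hf : ForcesLargeColors G (2 * k) 4) :
    ForcesLargeColors (PackingColoring.joinCopies G r) (2 * (k + 1)) 4 := by
  have hpeel : ForcesLargeColors G (2 * (k + 1)) 2 :=
    (hf.succ (h.packingCardLE_one le_rfl)).succ (h.packingCardLE_one (Nat.le_succ _))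
  exact hpeel.joinCopies h.connected r

/-! ### Certifying distances and packing numbers by computation -/

/-- Whether at most `n` steps along the neighbor lists `nbrs` lead from `u` to `v`. -/
def reachesWithin [DecidableEq V] (nbrs : V → List V) : ℕ → V → V → Bool
  | 0, u, v => u = v
  | n + 1, u, v => reachesWithin nbrs n u v || (nbrs u).any (reachesWithin nbrs n · v)

theorem exists_walk_of_reachesWithin [DecidableEq V] {nbrs : V → List V}
    (hnbrs : ∀ u, ∀ v ∈ nbrs u, G.Adj u v) {n : ℕ} {u v : V}
    (h : reachesWithin nbrs n u v) : ∃ p : G.Walk u v, p.length ≤ n := by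
  induction n generalizing u with
  | zero =>
    obtain rfl : u = v := by simpa only [reachesWithin, decide_eq_true_eq] using h
    exact ⟨.nil, le_rfl⟩
  | succ n ih =>
    simp only [reachesWithin, Bool.or_eq_true, List.any_eq_true] at h
    rcases h with h | ⟨w, hw, h⟩
    · obtain ⟨p, hp⟩ := ih h
      exact ⟨p, Nat.le_succ_of_le hp⟩
    · obtain ⟨p, hp⟩ := ih h
      exact ⟨.cons (hnbrs u w hw) p, Nat.succ_le_succ hp⟩

/-- A branch-and-bound search verifying that a conflict-free set of elements of `l` has at most `k`
elements: it branches on whether the head of `l` belongs to the set, at most `n` times in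
succession, and stops once at most `k` candidates are left. -/
def verifyCardLE {α : Type*} (conflict : α → α → Bool) : ℕ → List α → ℕ → Bool
  | 0, l, k => l.length ≤ k
  | _ + 1, [], _ => true
  | _ + 1, _ :: _, 0 => false
  | n + 1, v :: l, k + 1 => l.length ≤ k ||
      (verifyCardLE conflict n (l.filter (!conflict v ·)) k && verifyCardLE conflict n l (k + 1))

theorem card_le_of_forall_mem_list {α : Type*} {l : List α} {s : Finset α} (hs : ∀ a ∈ s, a ∈ l) :
    s.card ≤ l.length := by
  classical
  exact (Finset.card_le_card fun a ha => List.mem_toFinset.2 (hs a ha)).trans l.toFinset_card_le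

theorem card_le_of_verifyCardLE {α : Type*} {conflict : α → α → Bool} {n k : ℕ} {l : List α}
    (h : verifyCardLE conflict n l k) {s : Finset α} (hs : ∀ a ∈ s, a ∈ l)
    (hconf : (s : Set α).Pairwise fun a b => conflict a b = false) : s.card ≤ k := by
  classical
  fun_induction verifyCardLE conflict n l k generalizing s with
  | case1 l k => exact (card_le_of_forall_mem_list hs).trans (of_decide_eq_true h)
  | case2 => exact (card_le_of_forall_mem_list hs).trans (Nat.zero_le _)
  | case3 => exact absurd h Bool.false_ne_true
  | case4 n v l k ih_mem ih_notMem =>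
    simp only [Bool.or_eq_true, decide_eq_true_eq, Bool.and_eq_true] at h
    rcases h with hlen | ⟨h_mem, h_notMem⟩
    · exact (card_le_of_forall_mem_list hs).trans (Nat.succ_le_succ hlen)
    by_cases hv : v ∈ s
    · have hrest : (s.erase v).card ≤ k := by
        refine ih_mem h_mem (fun a ha => ?_) (hconf.mono (Finset.erase_subset v s))
        obtain ⟨hav, ha⟩ := Finset.mem_erase.1 ha
        rw [List.mem_filter, hconf hv ha hav.symm]
        exact ⟨List.mem_of_ne_of_mem hav (hs a ha), rfl⟩
      rw [← Finset.card_erase_add_one hv]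
      exact Nat.succ_le_succ hrest
    · refine ih_notMem h_notMem (fun a ha => ?_) hconf
      exact List.mem_of_ne_of_mem (ne_of_mem_of_not_mem ha hv) (hs a ha)

theorem packingCardLE_of_verifyCardLE [Finite V] {near : V → V → Bool}
    (hnear : ∀ u v, near u v → G.dist u v ≤ i) {n : ℕ} {l : List V} (hl : ∀ v, v ∈ l)
    (h : verifyCardLE near n l a) : PackingCardLE G i a := by
  intro W hW
  rw [Set.ncard_eq_toFinset_card W]
  refine card_le_of_verifyCardLE h (fun v _ => hl v) fun u hu v hv huv => ?_
  rw [Set.Finite.coe_toFinset] at hu hv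
  exact Bool.eq_false_iff.2 fun huv' => (hW u hu v hv huv).not_ge (hnear u v huv')

/-! ### The base graph -/

/-- The neighbors in `baseGraph`: every `v` is adjacent to `v - 1` and `v + 1`, and all vertices but
`0` to the other end of one of 13 chords. The chords were found by computer search among those
invariant under `v ↦ -v`. -/
def baseNeighbors : Fin 27 → List (Fin 27) :=
  ![[26, 1], [0, 2, 6], [1, 3, 12], [2, 4, 17], [3, 5, 23], [4, 6, 18], [5, 7, 1], [6, 8, 14],
    [7, 9, 16], [8, 10, 22], [9, 11, 24], [10, 12, 19], [11, 13, 2], [12, 14, 20], [13, 15, 7],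
    [14, 16, 25], [15, 17, 8], [16, 18, 3], [17, 19, 5], [18, 20, 11], [19, 21, 13], [20, 22, 26],
    [21, 23, 9], [22, 24, 4], [23, 25, 10], [24, 26, 15], [25, 0, 21]]

/-- A subcubic graph of diameter 4, rooted at `0`, which forces four colors `≥ 8`. -/
def baseGraph : SimpleGraph (Fin 27) where
  Adj u v := v ∈ baseNeighbors u
  symm := ⟨by decide +kernel⟩
  loopless := ⟨by decide +kernel⟩

theorem exists_walk_baseGraph {n : ℕ} {u v : Fin 27} (h : reachesWithin baseNeighbors n u v) :
    ∃ p : baseGraph.Walk u v, p.length ≤ n :=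
  exists_walk_of_reachesWithin (fun _ _ h => h) h

theorem dist_baseGraph_le {n : ℕ} {u v : Fin 27} (h : reachesWithin baseNeighbors n u v) :
    baseGraph.dist u v ≤ n := by
  obtain ⟨p, hp⟩ := exists_walk_baseGraph h
  exact (SimpleGraph.dist_le p).trans hp

theorem reachesWithin_baseNeighbors_four : ∀ u v, reachesWithin baseNeighbors 4 u v := by
  decide +kernel

theorem ncard_neighborSet_baseGraph_le (v : Fin 27) :
    (baseGraph.neighborSet v).ncard ≤ (baseNeighbors v).length := by
  have hcoe : baseGraph.neighborSet v = ((baseNeighbors v).toFinset : Set (Fin 27)) :=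
    (List.coe_toFinset _).symm
  rw [hcoe, Set.ncard_coe_finset]
  exact List.toFinset_card_le _

theorem isRootedSubcubic_baseGraph : IsRootedSubcubic baseGraph 0 4 where
  connected := ⟨fun u v => (exists_walk_baseGraph (reachesWithin_baseNeighbors_four u v)).nonempty⟩
  ncard_neighborSet_le v :=
    (ncard_neighborSet_baseGraph_le v).trans (by revert v; decide +kernel)
  ncard_neighborSet_root_le := ncard_neighborSet_baseGraph_le 0
  dist_root_le v := dist_baseGraph_le (reachesWithin_baseNeighbors_four v 0)

theorem packingCardLE_baseGraph_of_verifyCardLE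
    (h : verifyCardLE (reachesWithin baseNeighbors i) 27 (List.finRange 27) a) :
    PackingCardLE baseGraph i a :=
  packingCardLE_of_verifyCardLE (fun _ _ => dist_baseGraph_le) List.mem_finRange h

theorem packingCardLE_baseGraph_one : PackingCardLE baseGraph 1 11 :=
  packingCardLE_baseGraph_of_verifyCardLE (by decide +kernel)

theorem packingCardLE_baseGraph_two : PackingCardLE baseGraph 2 5 :=
  packingCardLE_baseGraph_of_verifyCardLE (by decide +kernel)

theorem packingCardLE_baseGraph_three : PackingCardLE baseGraph 3 3 :=
  packingCardLE_baseGraph_of_verifyCardLE (by decide +kernel)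

theorem packingCardLE_baseGraph_of_four_le (hi : 4 ≤ i) : PackingCardLE baseGraph i 1 :=
  packingCardLE_one_of_dist_le fun u v =>
    (dist_baseGraph_le (reachesWithin_baseNeighbors_four u v)).trans hi

theorem forcesLargeColors_baseGraph : ForcesLargeColors baseGraph 8 4 := by
  have h1 : ForcesLargeColors baseGraph 1 27 := by simpa using forcesLargeColors_one baseGraph
  have h2 : ForcesLargeColors baseGraph 2 16 := h1.succ packingCardLE_baseGraph_one
  have h3 : ForcesLargeColors baseGraph 3 11 := h2.succ packingCardLE_baseGraph_two
  have h4 : ForcesLargeColors baseGraph 4 8 := h3.succ packingCardLE_baseGraph_three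
  have h6 : ForcesLargeColors baseGraph 6 6 :=
    (h4.succ (packingCardLE_baseGraph_of_four_le (by omega))).succ
      (packingCardLE_baseGraph_of_four_le (by omega))
  exact (h6.succ (packingCardLE_baseGraph_of_four_le (by omega))).succ
    (packingCardLE_baseGraph_of_four_le (by omega))

theorem exists_isRootedSubcubic_forcesLargeColors (n : ℕ) :
    ∃ (V : Type) (_ : Fintype V) (G : SimpleGraph V) (r : V),
      IsRootedSubcubic G r (4 + n) ∧ ForcesLargeColors G (2 * (4 + n)) 4 := by
  induction n with
  | zero => exact ⟨_, inferInstance, _, _, isRootedSubcubic_baseGraph, forcesLargeColors_baseGraph⟩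
  | succ n ih =>
    obtain ⟨V, _, G, r, hG, hf⟩ := ih
    exact ⟨_, inferInstance, _, _, hG.joinCopies, hG.forcesLargeColors_joinCopies hf⟩

end PackingColoring

/-- The packing chromatic number is unbounded on connected subcubic graphs:
for every `n` there is a finite connected simple graph with all degrees at most
`3` whose packing chromatic number is at least `n`. -/
theorem stmt16 (n : ℕ) :
    ∃ (V : Type) (_ : Fintype V) (G : SimpleGraph V),
      G.Connected ∧ (∀ v, (G.neighborSet v).ncard ≤ 3) ∧
      n ≤ packingChromaticNumber G := by
  obtain ⟨V, hV, G, r, hG, hf⟩ := PackingColoring.exists_isRootedSubcubic_forcesLargeColors n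
  have hlarge : 2 * (4 + n) ≤ packingChromaticNumber G :=
    hf.le_packingChromaticNumber (by omega)
  exact ⟨V, hV, G, hG.connected, hG.ncard_neighborSet_le, by omega⟩
end
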